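/- arXiv:2511.08611 — 2 statements merged into one kernel-verified Lean document; each statement's English description precedes it below -/
import Mathlib

section
/- Let G be a directed multigraph with finite nonempty node set and finite arrow set. If G is strongly connected, then there exists a marking of G that is both live and safe. -/
open Classical

variable {V A : Type}

/-- A directed path from `v` to `w`: a nonempty list of arrows chained
head-to-tail, starting at `v` and ending at `w`. -/
def PathFrom (s t : A → V) (v w : V) (p : List A) : Prop :=
  List.Chain' (fun a b => t a = s b) p ∧
    (p.map s).head? = some v ∧ (p.map t).getLast? = some w

/-- A directed circuit: a nonempty directed path that returns to its start. -/
def IsCircuit (s t : A → V) (p : List A) : Prop :=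
  ∃ v : V, PathFrom s t v v p

/-- Strong connectivity: a directed path between every ordered pair of
distinct nodes. -/
def StronglyConnected (s t : A → V) : Prop :=
  ∀ v w : V, v ≠ w → ∃ p : List A, PathFrom s t v w p

/-- Adjacency ignoring arrow direction. -/
def WeakAdj (s t : A → V) (v w : V) : Prop :=
  ∃ a : A, (s a = v ∧ t a = w) ∨ (s a = w ∧ t a = v)

/-- Weak connectivity: every pair of nodes is joined by an undirected path. -/
def WeaklyConnected (s t : A → V) : Prop :=
  ∀ v w : V, Relation.ReflTransGen (WeakAdj s t) v w

/-- A node `v` is enabled in marking `M` if every in-arrow of `v` holds a token. -/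
def Enabled (s t : A → V) (M : A → ℕ) (v : V) : Prop :=
  ∀ a : A, t a = v → 1 ≤ M a

/-- Firing node `v`: remove a token from each in-arrow, add one to each out-arrow. -/
noncomputable def fire (s t : A → V) (M : A → ℕ) (v : V) : A → ℕ :=
  fun a => M a - (if t a = v then 1 else 0) + (if s a = v then 1 else 0)

/-- One firing step between markings. -/
def Step (s t : A → V) (M M' : A → ℕ) : Prop :=
  ∃ v : V, Enabled s t M v ∧ M' = fire s t M v

/-- Reachability: final marking of some (possibly empty) firing sequence. -/
def Reaches (s t : A → V) : (A → ℕ) → (A → ℕ) → Prop :=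
  Relation.ReflTransGen (Step s t)

/-- A marking is live if from every reachable marking, every node can
eventually be enabled. -/
def Live (s t : A → V) (M : A → ℕ) : Prop :=
  ∀ (v : V) (M' : A → ℕ), Reaches s t M M' →
    ∃ M'' : A → ℕ, Reaches s t M' M'' ∧ Enabled s t M'' v

/-- A marking is safe if every reachable marking has at most one token per arrow. -/
def Safe (s t : A → V) (M : A → ℕ) : Prop :=
  ∀ M' : A → ℕ, Reaches s t M M' → ∀ a : A, M' a ≤ 1

/-- `ValidSeq s t M vs`: the list of nodes `vs` is a firing sequence from `M`
(each node is enabled when it fires). -/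
def ValidSeq (s t : A → V) : (A → ℕ) → List V → Prop
  | _, [] => True
  | M, v :: vs => Enabled s t M v ∧ ValidSeq s t (fire s t M v) vs

/-- The final marking of a firing sequence. -/
noncomputable def execute (s t : A → V) : (A → ℕ) → List V → (A → ℕ)
  | M, [] => M
  | M, v :: vs => execute s t (fire s t M v) vs

/-!
A node waits for the sources of its token-free in-arrows. If this waiting relation is well-founded,
a minimal node among those that `v` waits for is enabled, and firing it removes it from the set `v`
waits for; as firing preserves well-foundedness, the marking is live. Firing also preserves the
number of tokens on each circuit. So choose a circuit through every arrow and, among the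
well-founded markings, one with the fewest tokens on all these circuits together: if it could reach
a marking with two tokens on an arrow, capping that marking at one token per arrow would beat the
minimum.
-/

section

variable {s t : A → V} {M N : A → ℕ} {u v w x y : V} {a : A} {p : List A}

/-- The waiting relation of the marking `M`: some token-free arrow goes from `u` to `v`, so `v` is
not enabled before `u` fires. For finitely many arrows, it is well-founded exactly when every
circuit carries a token. -/
def TokenFreeAdj (s t : A → V) (M : A → ℕ) (u v : V) : Prop :=
  ∃ a : A, s a = u ∧ t a = v ∧ M a = 0

theorem enabled_iff_forall_not_tokenFreeAdj :
    Enabled s t M v ↔ ∀ u, ¬ TokenFreeAdj s t M u v := by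
  simp only [Enabled, TokenFreeAdj, Nat.one_le_iff_ne_zero]
  grind

theorem fire_add_ite_target (hv : Enabled s t M v) (a : A) :
    fire s t M v a + (if t a = v then 1 else 0) = M a + (if s a = v then 1 else 0) := by
  have := hv a
  grind [fire]

theorem TokenFreeAdj.ne_of_fire (h : TokenFreeAdj s t (fire s t M u) x y) : x ≠ u := by
  obtain ⟨a, rfl, -, ha⟩ := h
  rintro rfl
  simp [fire] at ha

theorem TokenFreeAdj.of_fire (h : TokenFreeAdj s t (fire s t M u) x y) (hy : y ≠ u) :
    TokenFreeAdj s t M x y := by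
  obtain ⟨a, hs, rfl, ha⟩ := h
  exact ⟨a, hs, rfl, by grind [fire]⟩

theorem wellFounded_tokenFreeAdj_one : WellFounded (TokenFreeAdj s t 1) :=
  ⟨fun _ => ⟨_, fun _ ⟨_, _, _, h⟩ => absurd h one_ne_zero⟩⟩

theorem wellFounded_tokenFreeAdj_of_support_subset
    (h : Function.support M ⊆ Function.support N) (hM : WellFounded (TokenFreeAdj s t M)) :
    WellFounded (TokenFreeAdj s t N) :=
  Subrelation.wf (fun ⟨a, hs, ht, ha⟩ => ⟨a, hs, ht, by_contra fun hMa => h hMa ha⟩) hM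

theorem wellFounded_tokenFreeAdj_fire (hM : WellFounded (TokenFreeAdj s t M)) (u : V) :
    WellFounded (TokenFreeAdj s t (fire s t M u)) := by
  have acc_of_ne : ∀ x, x ≠ u → Acc (TokenFreeAdj s t (fire s t M u)) x := fun x =>
    hM.induction (C := fun x => x ≠ u → Acc _ x) x fun _ ih hx =>
      ⟨_, fun y hy => ih y (hy.of_fire hx) hy.ne_of_fire⟩
  exact ⟨fun _ => ⟨_, fun y hy => acc_of_ne y hy.ne_of_fire⟩⟩

theorem Reaches.wellFounded_tokenFreeAdj (h : Reaches s t M N)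
    (hM : WellFounded (TokenFreeAdj s t M)) : WellFounded (TokenFreeAdj s t N) := by
  induction h with
  | refl => exact hM
  | tail _ hstep ih =>
    obtain ⟨u, -, rfl⟩ := hstep
    exact wellFounded_tokenFreeAdj_fire ih u

/-- The nodes that must fire, directly or indirectly, before `v` can be enabled. -/
def blockers (s t : A → V) (M : A → ℕ) (v : V) : Set V :=
  {u | Relation.TransGen (TokenFreeAdj s t M) u v}

theorem blockers_finite [Finite A] (s t : A → V) (M : A → ℕ) (v : V) :
    (blockers s t M v).Finite := by
  refine (Set.finite_range s).subset fun u hu => ?_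
  obtain ⟨_, ⟨a, hs, -⟩, -⟩ := Relation.TransGen.head'_iff.mp hu
  exact ⟨a, hs⟩

theorem exists_enabled_mem_blockers (hM : WellFounded (TokenFreeAdj s t M))
    (hv : ¬ Enabled s t M v) : ∃ u ∈ blockers s t M v, Enabled s t M u := by
  have hne : (blockers s t M v).Nonempty := by
    simp only [enabled_iff_forall_not_tokenFreeAdj, not_forall, not_not] at hv
    exact hv.imp fun _ => .single
  obtain ⟨u, hu, hmin⟩ := hM.has_min _ hne
  exact ⟨u, hu, enabled_iff_forall_not_tokenFreeAdj.mpr fun x hx => hmin x (.head hx hu) hx⟩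

theorem blockers_fire_ssubset (hM : WellFounded (TokenFreeAdj s t M))
    (hu : u ∈ blockers s t M v) : blockers s t (fire s t M u) v ⊂ blockers s t M v := by
  have hvu : v ≠ u := by
    rintro rfl
    exact hM.transGen.irrefl.irrefl _ hu
  have mem_and_ne : ∀ x ∈ blockers s t (fire s t M u) v, x ∈ blockers s t M v ∧ x ≠ u := by
    intro x hx
    induction hx using Relation.TransGen.head_induction_on with
    | single h => exact ⟨.single (h.of_fire hvu), h.ne_of_fire⟩
    | head h _ ih => exact ⟨.head (h.of_fire ih.2) ih.1, h.ne_of_fire⟩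
  exact (Set.ssubset_iff_of_subset fun x hx => (mem_and_ne x hx).1).mpr
    ⟨u, hu, fun h => (mem_and_ne u h).2 rfl⟩

theorem exists_reaches_enabled (hM : WellFounded (TokenFreeAdj s t M))
    (hfin : (blockers s t M v).Finite) : ∃ N, Reaches s t M N ∧ Enabled s t N v := by
  induction hn : (blockers s t M v).ncard using Nat.strong_induction_on generalizing M with
  | _ _ ih =>
    subst hn
    by_cases hv : Enabled s t M v
    · exact ⟨M, .refl, hv⟩
    · obtain ⟨u, hu, hEu⟩ := exists_enabled_mem_blockers hM hv
      have hss := blockers_fire_ssubset hM hu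
      obtain ⟨N, hN, hNv⟩ := ih _ (Set.ncard_lt_ncard hss hfin)
        (wellFounded_tokenFreeAdj_fire hM u) (hfin.subset hss.subset) rfl
      exact ⟨N, .head ⟨u, hEu, rfl⟩ hN, hNv⟩

theorem live_of_wellFounded_tokenFreeAdj [Finite A] (hM : WellFounded (TokenFreeAdj s t M)) :
    Live s t M := fun v N hN =>
  exists_reaches_enabled (hN.wellFounded_tokenFreeAdj hM) (blockers_finite s t N v)

-- `PathFrom` is stated with a deprecated alias of `List.IsChain`, to which the `simp` lemmas on
-- chains do not apply.
theorem pathFrom_iff_isChain : PathFrom s t v w p ↔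
    p.IsChain (fun a b => t a = s b) ∧ (p.map s).head? = some v ∧ (p.map t).getLast? = some w :=
  Iff.rfl

theorem not_pathFrom_nil : ¬ PathFrom s t v w [] := by
  simp [pathFrom_iff_isChain]

theorem pathFrom_singleton : PathFrom s t v w [a] ↔ s a = v ∧ t a = w := by
  simp [pathFrom_iff_isChain]

theorem pathFrom_cons_cons {b : A} :
    PathFrom s t v w (a :: b :: p) ↔ s a = v ∧ PathFrom s t (t a) w (b :: p) := by
  simp only [pathFrom_iff_isChain, List.isChain_cons_cons, List.map_cons, List.head?_cons,
    List.getLast?_cons_cons, Option.some.injEq]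
  tauto

theorem PathFrom.cons (hp : PathFrom s t (t a) w p) : PathFrom s t (s a) w (a :: p) := by
  cases p with
  | nil => exact absurd hp not_pathFrom_nil
  | cons b p => exact pathFrom_cons_cons.mpr ⟨rfl, hp⟩

theorem PathFrom.cons_map_target (hp : PathFrom s t v w p) : v :: p.map t = p.map s ++ [w] := by
  induction p generalizing v with
  | nil => exact absurd hp not_pathFrom_nil
  | cons a p ih =>
    cases p with
    | nil =>
      obtain ⟨rfl, rfl⟩ := pathFrom_singleton.mp hp
      rfl
    | cons b p =>
      obtain ⟨rfl, htail⟩ := pathFrom_cons_cons.mp hp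
      exact congrArg (s a :: ·) (ih htail)

theorem StronglyConnected.exists_isCircuit_mem (h : StronglyConnected s t) (a : A) :
    ∃ p, IsCircuit s t p ∧ a ∈ p := by
  by_cases ha : s a = t a
  · exact ⟨[a], ⟨s a, pathFrom_singleton.mpr ⟨rfl, ha.symm⟩⟩, List.mem_singleton_self a⟩
  · obtain ⟨p, hp⟩ := h (t a) (s a) (Ne.symm ha)
    exact ⟨a :: p, ⟨s a, hp.cons⟩, List.mem_cons_self⟩

theorem IsCircuit.map_target_perm_map_source (hp : IsCircuit s t p) :
    (p.map t).Perm (p.map s) := by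
  obtain ⟨v, hv⟩ := hp
  refine List.Perm.cons_inv (a := v) ?_
  rw [hv.cons_map_target]
  exact List.perm_append_singleton v _

/-- The number of tokens of `M` on `p`, with multiplicity if `p` repeats an arrow. -/
def tokenCount (M : A → ℕ) (p : List A) : ℕ :=
  (p.map M).sum

theorem tokenCount_mono (h : M ≤ N) (p : List A) : tokenCount M p ≤ tokenCount N p :=
  List.sum_le_sum fun a _ => h a

theorem tokenCount_lt_tokenCount (h : M ≤ N) (hap : a ∈ p) (ha : M a < N a) :
    tokenCount M p < tokenCount N p :=
  List.sum_lt_sum M N (fun b _ => h b) ⟨a, hap, ha⟩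

theorem IsCircuit.tokenCount_fire (hp : IsCircuit s t p) (hv : Enabled s t M v) :
    tokenCount (fire s t M v) p = tokenCount M p := by
  have hst : (p.map fun a => if t a = v then 1 else 0).sum =
      (p.map fun a => if s a = v then 1 else 0).sum := by
    simpa [Function.comp_def] using
      (hp.map_target_perm_map_source.map fun x => if x = v then 1 else 0).sum_nat
  have hsum := congrArg (fun f => (p.map f).sum) (funext (fire_add_ite_target hv))
  simp only [List.sum_map_add, hst] at hsum
  exact Nat.add_right_cancel hsum

theorem Reaches.tokenCount_eq (h : Reaches s t M N) (hp : IsCircuit s t p) :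
    tokenCount N p = tokenCount M p := by
  induction h with
  | refl => rfl
  | tail _ hstep ih =>
    obtain ⟨v, hv, rfl⟩ := hstep
    rw [hp.tokenCount_fire hv, ih]

end

theorem stmt_3_general [Finite A] (s t : A → V) (h : ∀ a, ∃ p, IsCircuit s t p ∧ a ∈ p) :
    ∃ M : A → ℕ, Live s t M ∧ Safe s t M := by
  have := Fintype.ofFinite A
  choose c hc hmem using h
  let total (M : A → ℕ) : ℕ := ∑ a, tokenCount M (c a)
  obtain ⟨M, hM, hmin⟩ := (measure total).wf.has_min
    {M | WellFounded (TokenFreeAdj s t M)} ⟨1, wellFounded_tokenFreeAdj_one⟩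
  refine ⟨M, live_of_wellFounded_tokenFreeAdj hM, fun N hN a => not_lt.mp fun ha => ?_⟩
  have hcap : WellFounded (TokenFreeAdj s t (N ⊓ 1)) :=
    wellFounded_tokenFreeAdj_of_support_subset (fun b => by simp)
      (hN.wellFounded_tokenFreeAdj hM)
  have htotal : total N = total M := Finset.sum_congr rfl fun b _ => hN.tokenCount_eq (hc b)
  refine hmin (N ⊓ 1) hcap (htotal ▸ ?_ : total (N ⊓ 1) < total M)
  have ha_cap : (N ⊓ 1) a < N a := inf_lt_left.mpr ha.not_ge
  exact Finset.sum_lt_sum (fun b _ => tokenCount_mono inf_le_left (c b))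
    ⟨a, Finset.mem_univ a, tokenCount_lt_tokenCount inf_le_left (hmem a) ha_cap⟩

/-- Every strongly connected directed multigraph (finite nonempty
node set, finite arrow set) admits a marking that is both live and safe. -/
theorem stmt_3 {V A : Type} [Fintype V] [Nonempty V] [Fintype A]
    (s t : A → V)
    (hstrong : StronglyConnected s t) :
    ∃ M : A → ℕ, Live s t M ∧ Safe s t M :=
  stmt_3_general s t hstrong.exists_isCircuit_mem
end

section
/- Let G be a directed multigraph with finite nonempty node set and finite arrow set, let M be a marking of G that is both live and safe, and let v₁,…,vₙ (with markings M = M₀, M₁, …, Mₙ) be a firing sequence from M. Suppose node v fires at positions i and j of the sequence with i < j and with no occurrence of v at any position strictly between i and j. Then for every node u ≠ v such that there is at least one arrow a with s(a) = v and t(a) = u, the node u occurs at least once among the positions strictly between i and j. -/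
open Classical

variable {V A : Type}

/-!
Every firing of `s a` puts one token on `a` and every firing of `t a` removes one, so the change of
the token count on `a` along a piece of a firing sequence is the number of firings of `s a` minus
that of `t a`. Two firings of `s a` add two tokens to an arrow that can hold only one; hence `t a`
fires in between, and even once more often than `s a` does.
-/

section FiringSequences

variable {s t : A → V} {M : A → ℕ} {vs : List V}

theorem Enabled.fire_apply_add {v : V} (h : Enabled s t M v) (a : A) :
    fire s t M v a + (if t a = v then 1 else 0) = M a + (if s a = v then 1 else 0) := by
  have := h a
  simp only [fire]
  split_ifs <;> grind

theorem execute_append (s t : A → V) (M : A → ℕ) (xs ys : List V) :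
    execute s t M (xs ++ ys) = execute s t (execute s t M xs) ys := by
  induction xs generalizing M with
  | nil => rfl
  | cons x _ ih => exact ih (fire s t M x)

theorem validSeq_append {xs ys : List V} :
    ValidSeq s t M (xs ++ ys) ↔ ValidSeq s t M xs ∧ ValidSeq s t (execute s t M xs) ys := by
  induction xs generalizing M with
  | nil => simp only [List.nil_append, ValidSeq, execute, true_and]
  | cons x xs ih => simp only [List.cons_append, ValidSeq, execute, ih, and_assoc]

namespace ValidSeq

theorem take (h : ValidSeq s t M vs) (k : ℕ) : ValidSeq s t M (vs.take k) :=
  (validSeq_append.mp ((vs.take_append_drop k).symm ▸ h)).1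

theorem reaches_execute (h : ValidSeq s t M vs) : Reaches s t M (execute s t M vs) := by
  induction vs generalizing M with
  | nil => exact .refl
  | cons v vs ih => exact .head ⟨v, h.1, rfl⟩ (ih h.2)

theorem execute_take_succ_add (h : ValidSeq s t M vs) (a : A) (k : ℕ) :
    execute s t M (vs.take (k + 1)) a + (if vs[k]? = some (t a) then 1 else 0) =
      execute s t M (vs.take k) a + (if vs[k]? = some (s a) then 1 else 0) := by
  have hk := h.take (k + 1)
  rw [List.take_add_one] at hk ⊢
  cases hv : vs[k]? with
  | none => simp
  | some v =>
    rw [hv, Option.toList_some, validSeq_append] at hk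
    have enabled : Enabled s t (execute s t M (vs.take k)) v := hk.2.1
    simpa [execute_append, execute, eq_comm] using enabled.fire_apply_add a

theorem execute_take_add_card (h : ValidSeq s t M vs) (a : A) {i j : ℕ} (hij : i ≤ j) :
    execute s t M (vs.take j) a + ((Finset.Ico i j).filter (fun k => vs[k]? = some (t a))).card =
      execute s t M (vs.take i) a +
        ((Finset.Ico i j).filter (fun k => vs[k]? = some (s a))).card := by
  induction j, hij using Nat.le_induction with
  | base => simp
  | succ j hij ih =>
    have balance := h.execute_take_succ_add a j
    simp only [Finset.card_filter, Finset.sum_Ico_succ_top hij] at ih ⊢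
    lia

end ValidSeq

end FiringSequences

theorem stmt_5_general {V A : Type} (s t : A → V)
    (M : A → ℕ) (hsafe : Safe s t M)
    (vs : List V) (hseq : ValidSeq s t M vs)
    (v : V) (i j : ℕ) (hij : i < j)
    (hvi : vs[i]? = some v) (hvj : vs[j]? = some v)
    (u : V) (huv : u ≠ v) (harrow : ∃ a : A, s a = v ∧ t a = u) :
    ((Finset.Ioo i j).filter (fun k => vs[k]? = some v)).card <
      ((Finset.Ioo i j).filter (fun k => vs[k]? = some u)).card := by
  obtain ⟨a, rfl, rfl⟩ := harrow
  have balance := hseq.execute_take_add_card a (hij.le.trans j.le_succ)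
  have capacity := hsafe _ (hseq.take (j + 1)).reaches_execute a
  have split_ends (w : V) :
      ((Finset.Ico i (j + 1)).filter (fun k => vs[k]? = some w)).card =
        (if s a = w then 1 else 0) +
          ((Finset.Ioo i j).filter (fun k => vs[k]? = some w)).card +
          (if s a = w then 1 else 0) := by
    simp only [Finset.card_filter]
    rw [Finset.sum_Ico_succ_top hij.le, ← Finset.Ioo_insert_left hij,
      Finset.sum_insert Finset.left_notMem_Ioo]
    simp only [hvi, hvj, Option.some.injEq]
  rw [split_ends, split_ends, if_pos rfl, if_neg huv.symm] at balance
  lia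

/-- In a firing sequence from a live and safe marking, between two
consecutive firings of a node `v` (positions `i < j`, no `v` strictly between),
every node `u ≠ v` that `v` has an arrow into fires at least once strictly
between positions `i` and `j`. -/
theorem stmt_5 {V A : Type} [Fintype V] [Nonempty V] [Fintype A]
    (s t : A → V)
    (M : A → ℕ) (hlive : Live s t M) (hsafe : Safe s t M)
    (vs : List V) (hseq : ValidSeq s t M vs)
    (v : V) (i j : ℕ) (hij : i < j) (hjlen : j < vs.length)
    (hvi : vs[i]? = some v) (hvj : vs[j]? = some v)
    (hmid : ∀ k : ℕ, i < k → k < j → vs[k]? ≠ some v)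
    (u : V) (huv : u ≠ v) (harrow : ∃ a : A, s a = v ∧ t a = u) :
    1 ≤ ((Finset.Ioo i j).filter (fun k => vs[k]? = some u)).card :=
  (Nat.zero_le _).trans_lt
    (stmt_5_general s t M hsafe vs hseq v i j hij hvi hvj u huv harrow)
end
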